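/- arXiv:2105.03805 — 4 statements merged into one kernel-verified Lean document; each statement's English description precedes it below -/
import Mathlib

section
/- Let n ≥ 2 be an integer and μ₁ > 0. Suppose h ∈ C²((0,∞)) ∩ C¹([0,∞)) is a solution of the steady equation 2r²h(r)h''(r) = (n-1)h(r)(h(r)-1) + r h'(r)(r h'(r) - (n-1)), h(r) > 0 for r > 0, with h(0) = 1 and h'(0) = μ₁. Then h'(r) → ∞ and h(r) → ∞ as r → ∞, and h(r) ≥ 1 + μ₁ r for all r > 0. -/
open Set Filter Topology

/-- `h` is a solution of the steady equation
`2r²h h'' = (n-1)h(h-1) + r h'(r h' - (n-1))`, `h > 0` on `(0,∞)`,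
with `h ∈ C²((0,∞)) ∩ C¹([0,∞))`, `h(0) = 1` and `h'(0) = μ₁`. -/
def IsSteadySol (n : ℕ) (μ₁ : ℝ) (h : ℝ → ℝ) : Prop :=
  ContDiffOn ℝ 2 h (Set.Ioi 0) ∧ ContDiffOn ℝ 1 h (Set.Ici 0) ∧
  (∀ r : ℝ, 0 < r →
    2 * r ^ 2 * h r * deriv (deriv h) r =
      ((n : ℝ) - 1) * h r * (h r - 1) +
        r * deriv h r * (r * deriv h r - ((n : ℝ) - 1)) ∧ 0 < h r) ∧
  h 0 = 1 ∧ derivWithin h (Set.Ici 0) 0 = μ₁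

/-!
Let `N = n - 1` and let `u = r h' - (h - 1)` be the drop from `(0, 1)` to the tangent line of `h`
at `r`, so that `u' = r h''`. In terms of `u` the steady equation reads
`2 r h u' + N u = N (h - 1)² + (r h')²`. Hence `u' ≥ 0` wherever `u < 0`, and `u 0 = 0` forces
`u ≥ 0`. As `((h - 1) / r)' = u / r²`, the slope `(h - 1) / r` increases from its limit `μ` at `0`,
which gives `h ≥ 1 + μ r`, and `h' ≥ (h - 1) / r`. Feeding these bounds back into the equation
gives `u ≥ (μ / 4) (r - 1 / μ)` for `r ≥ 1 / μ`, so the slope grows at least logarithmically.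
-/

lemma nonneg_of_forall_neg_deriv_nonneg {f : ℝ → ℝ} {a : ℝ} (hcont : ContinuousOn f (Ici a))
    (hdiff : DifferentiableOn ℝ f (Ioi a)) (ha : 0 ≤ f a)
    (hderiv : ∀ x, a < x → f x < 0 → 0 ≤ deriv f x) {x : ℝ} (hx : a ≤ x) : 0 ≤ f x := by
  by_contra! hneg
  have hcompact : IsCompact (Icc a x ∩ f ⁻¹' Ici 0) :=
    isCompact_Icc.of_isClosed_subset
      ((hcont.mono Icc_subset_Ici_self).preimage_isClosed_of_isClosed isClosed_Icc isClosed_Ici)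
      inter_subset_left
  obtain ⟨b, ⟨⟨hab, hbx⟩, hb⟩, hlast⟩ := hcompact.exists_isGreatest ⟨a, left_mem_Icc.2 hx, ha⟩
  have hneg_after : ∀ y ∈ Ioo b x, f y < 0 := fun y hy ↦ by
    by_contra! hy'
    exact hy.1.not_ge (hlast ⟨⟨hab.trans hy.1.le, hy.2.le⟩, hy'⟩)
  have hmono : MonotoneOn f (Icc b x) := by
    refine monotoneOn_of_deriv_nonneg (convex_Icc b x)
      (hcont.mono fun y hy ↦ hab.trans hy.1) ?_ ?_ <;> rw [interior_Icc]
    · exact hdiff.mono fun y hy ↦ hab.trans_lt hy.1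
    · exact fun y hy ↦ hderiv y (hab.trans_lt hy.1) (hneg_after y hy)
  exact hneg.not_ge (hb.trans (hmono (left_mem_Icc.2 hbx) (right_mem_Icc.2 hbx) hbx))

lemma tendsto_atTop_of_div_le_deriv {f : ℝ → ℝ} {c : ℝ} (hc : 0 < c)
    (hdiff : ∀ᶠ x in atTop, DifferentiableAt ℝ f x) (hderiv : ∀ᶠ x in atTop, c / x ≤ deriv f x) :
    Tendsto f atTop atTop := by
  obtain ⟨b, hb⟩ := eventually_atTop.1 ((eventually_gt_atTop 0).and (hdiff.and hderiv))
  have hsub : ∀ x ∈ Ici b,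
      HasDerivAt (fun y ↦ f y - c * Real.log y) (deriv f x - c * x⁻¹) x := fun x hx ↦
    (hb x hx).2.1.hasDerivAt.sub ((Real.hasDerivAt_log (hb x hx).1.ne').const_mul c)
  have hmono : MonotoneOn (fun y ↦ f y - c * Real.log y) (Ici b) :=
    monotoneOn_of_hasDerivWithinAt_nonneg (convex_Ici b)
      (fun x hx ↦ (hsub x hx).continuousAt.continuousWithinAt)
      (fun x hx ↦ (hsub x (interior_subset hx)).hasDerivWithinAt)
      (fun x hx ↦ sub_nonneg.2 ((hb x (interior_subset hx)).2.2))
  have hlog : Tendsto (fun x ↦ c * Real.log x + (f b - c * Real.log b)) atTop atTop :=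
    tendsto_atTop_add_const_right _ _ (Real.tendsto_log_atTop.const_mul_atTop hc)
  refine tendsto_atTop_mono' _ ?_ hlog
  filter_upwards [eventually_ge_atTop b] with x hx
  linarith [hmono self_mem_Ici hx hx]

/-- The height at `a` of the point `(a, f a)` above the tangent line to the graph of `f` at `x`.
It is nonnegative for convex `f`, and is the numerator of the derivative of `slope f a`. -/
noncomputable def tangentDrop (f : ℝ → ℝ) (a x : ℝ) : ℝ :=
  (x - a) * deriv f x - (f x - f a)

section TangentDrop

variable {f : ℝ → ℝ} {a x : ℝ}

lemma tangentDrop_self : tangentDrop f a a = 0 := by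
  simp [tangentDrop]

lemma hasDerivAt_tangentDrop (hf : DifferentiableAt ℝ f x)
    (hf' : DifferentiableAt ℝ (deriv f) x) :
    HasDerivAt (tangentDrop f a) ((x - a) * deriv (deriv f) x) x := by
  refine ((((hasDerivAt_id' x).sub_const a).mul hf'.hasDerivAt).sub
    (hf.hasDerivAt.sub_const (f a))).congr_deriv ?_
  ring

lemma continuousOn_tangentDrop (hf : ContDiffOn ℝ 1 f (Ici a)) :
    ContinuousOn (tangentDrop f a) (Ici a) := by
  have hderiv : ContinuousOn (derivWithin f (Ici a)) (Ici a) :=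
    hf.continuousOn_derivWithin (uniqueDiffOn_Ici a) le_rfl
  have hcont : ContinuousOn f (Ici a) := hf.continuousOn
  have hwithin :
      ContinuousOn (fun y ↦ (y - a) * derivWithin f (Ici a) y - (f y - f a)) (Ici a) := by
    fun_prop
  refine hwithin.congr fun y hy ↦ ?_
  rcases (mem_Ici.1 hy).eq_or_lt with rfl | hay
  · simp [tangentDrop]
  · simp only [tangentDrop, derivWithin_of_mem_nhds (Ici_mem_nhds hay)]

lemma hasDerivAt_slope (hx : x ≠ a) (hf : DifferentiableAt ℝ f x) :
    HasDerivAt (slope f a) (tangentDrop f a x / (x - a) ^ 2) x := by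
  rw [slope_fun_def_field]
  refine ((hf.hasDerivAt.sub_const (f a)).div ((hasDerivAt_id' x).sub_const a)
    (sub_ne_zero.2 hx)).congr_deriv ?_
  rw [tangentDrop]
  ring

lemma slope_le_deriv_of_tangentDrop_nonneg (hx : a < x) (hdrop : 0 ≤ tangentDrop f a x) :
    slope f a x ≤ deriv f x := by
  rw [slope_def_field, div_le_iff₀ (sub_pos.2 hx), mul_comm]
  exact sub_nonneg.1 hdrop

lemma monotoneOn_slope_of_tangentDrop_nonneg (hf : DifferentiableOn ℝ f (Ioi a))
    (hdrop : ∀ y, a < y → 0 ≤ tangentDrop f a y) : MonotoneOn (slope f a) (Ioi a) := by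
  have hderiv : ∀ y ∈ Ioi a, HasDerivAt (slope f a) (tangentDrop f a y / (y - a) ^ 2) y :=
    fun y hy ↦ hasDerivAt_slope (ne_of_gt hy) (hf.differentiableAt (Ioi_mem_nhds hy))
  exact monotoneOn_of_hasDerivWithinAt_nonneg (convex_Ioi a)
    (fun y hy ↦ (hderiv y hy).continuousAt.continuousWithinAt)
    (fun y hy ↦ (hderiv y (interior_subset hy)).hasDerivWithinAt)
    (fun y hy ↦ div_nonneg (hdrop y (interior_subset hy)) (sq_nonneg _))

lemma le_slope_of_tangentDrop_nonneg {m : ℝ} (hf : DifferentiableOn ℝ f (Ioi a))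
    (hfa : HasDerivWithinAt f m (Ici a) a) (hdrop : ∀ y, a < y → 0 ≤ tangentDrop f a y)
    (hx : a < x) : m ≤ slope f a x := by
  have hlim : Tendsto (slope f a) (𝓝[>] a) (𝓝 m) := by
    simpa only [hasDerivWithinAt_iff_tendsto_slope, Ici_sdiff_left] using hfa
  refine le_of_tendsto hlim ?_
  filter_upwards [Ioo_mem_nhdsGT hx] with y hy
  exact monotoneOn_slope_of_tangentDrop_nonneg hf hdrop hy.1 hx hy.2.le

end TangentDrop

/-- Solutions of the steady equation, as in `IsSteadySol`, with an arbitrary real parameter `N`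
in place of `n - 1`. -/
structure IsRealSteadySol (N μ : ℝ) (h : ℝ → ℝ) : Prop where
  contDiffOn_Ioi : ContDiffOn ℝ 2 h (Ioi 0)
  contDiffOn_Ici : ContDiffOn ℝ 1 h (Ici 0)
  equation : ∀ r, 0 < r → 2 * r ^ 2 * h r * deriv (deriv h) r =
    N * h r * (h r - 1) + r * deriv h r * (r * deriv h r - N)
  pos : ∀ r, 0 < r → 0 < h r
  apply_zero : h 0 = 1
  derivWithin_zero : derivWithin h (Ici 0) 0 = μ

lemma IsSteadySol.isRealSteadySol {n : ℕ} {μ : ℝ} {h : ℝ → ℝ} (hsol : IsSteadySol n μ h) :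
    IsRealSteadySol (n - 1) μ h := by
  obtain ⟨hC2, hC1, hode, h0, hμ⟩ := hsol
  exact ⟨hC2, hC1, fun r hr ↦ (hode r hr).1, fun r hr ↦ (hode r hr).2, h0, hμ⟩

namespace IsRealSteadySol

variable {N μ r : ℝ} {h : ℝ → ℝ}

lemma differentiableOn (hsol : IsRealSteadySol N μ h) : DifferentiableOn ℝ h (Ioi 0) :=
  hsol.contDiffOn_Ioi.differentiableOn two_ne_zero

lemma differentiableAt (hsol : IsRealSteadySol N μ h) (hr : 0 < r) : DifferentiableAt ℝ h r :=
  hsol.differentiableOn.differentiableAt (Ioi_mem_nhds hr)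

lemma differentiableAt_deriv (hsol : IsRealSteadySol N μ h) (hr : 0 < r) :
    DifferentiableAt ℝ (deriv h) r :=
  ((hsol.contDiffOn_Ioi.deriv_of_isOpen (m := 1) isOpen_Ioi (by norm_num)).differentiableOn
    one_ne_zero).differentiableAt (Ioi_mem_nhds hr)

lemma hasDerivWithinAt_zero (hsol : IsRealSteadySol N μ h) : HasDerivWithinAt h μ (Ici 0) 0 :=
  hsol.derivWithin_zero ▸
    (hsol.contDiffOn_Ici.differentiableOn one_ne_zero 0 self_mem_Ici).hasDerivWithinAt

lemma differentiableAt_tangentDrop (hsol : IsRealSteadySol N μ h) (hr : 0 < r) :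
    DifferentiableAt ℝ (tangentDrop h 0) r :=
  (hasDerivAt_tangentDrop (hsol.differentiableAt hr)
    (hsol.differentiableAt_deriv hr)).differentiableAt

lemma tangentDrop_eq (hsol : IsRealSteadySol N μ h) (r : ℝ) :
    tangentDrop h 0 r = r * deriv h r - (h r - 1) := by
  rw [tangentDrop, hsol.apply_zero, sub_zero]

lemma two_mul_mul_deriv_tangentDrop (hsol : IsRealSteadySol N μ h) (hr : 0 < r) :
    2 * r * h r * deriv (tangentDrop h 0) r =
      N * (h r - 1) ^ 2 + (r * deriv h r) ^ 2 - N * tangentDrop h 0 r := by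
  rw [(hasDerivAt_tangentDrop (hsol.differentiableAt hr) (hsol.differentiableAt_deriv hr)).deriv,
    sub_zero, hsol.tangentDrop_eq]
  linear_combination hsol.equation r hr

lemma tangentDrop_nonneg (hsol : IsRealSteadySol N μ h) (hN : 0 ≤ N) (hr : 0 ≤ r) :
    0 ≤ tangentDrop h 0 r := by
  refine nonneg_of_forall_neg_deriv_nonneg (continuousOn_tangentDrop hsol.contDiffOn_Ici)
    (fun x hx ↦ (hsol.differentiableAt_tangentDrop hx).differentiableWithinAt)
    tangentDrop_self.ge (fun x hx hneg ↦ ?_) hr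
  have hsource : 0 ≤ 2 * x * h x * deriv (tangentDrop h 0) x := by
    rw [hsol.two_mul_mul_deriv_tangentDrop hx]
    have hdamping : N * tangentDrop h 0 x ≤ 0 := mul_nonpos_of_nonneg_of_nonpos hN hneg.le
    linarith [mul_nonneg hN (sq_nonneg (h x - 1)), sq_nonneg (x * deriv h x)]
  have hhx := hsol.pos x hx
  exact nonneg_of_mul_nonneg_right hsource (by positivity)

lemma le_slope (hsol : IsRealSteadySol N μ h) (hN : 0 ≤ N) (hr : 0 < r) : μ ≤ slope h 0 r :=
  le_slope_of_tangentDrop_nonneg hsol.differentiableOn hsol.hasDerivWithinAt_zero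
    (fun _ hy ↦ hsol.tangentDrop_nonneg hN hy.le) hr

lemma one_add_mul_le (hsol : IsRealSteadySol N μ h) (hN : 0 ≤ N) (hr : 0 < r) :
    1 + μ * r ≤ h r := by
  have hslope := hsol.le_slope hN hr
  rw [slope_def_field, sub_zero, hsol.apply_zero, le_div_iff₀ hr] at hslope
  linarith

lemma div_four_le_deriv_tangentDrop_of_le (hsol : IsRealSteadySol N μ h) (hN : 0 ≤ N) (hμ : 0 < μ)
    (hr : 1 / μ ≤ r) (hdrop : tangentDrop h 0 r ≤ μ / 4 * r) :
    μ / 4 ≤ deriv (tangentDrop h 0) r := by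
  have hr0 : 0 < r := (one_div_pos.2 hμ).trans_le hr
  have hμr : 1 ≤ μ * r := (div_le_iff₀' hμ).1 hr
  obtain ⟨p, hp⟩ : ∃ p, p = h r - 1 := ⟨_, rfl⟩
  have hμp : μ * r ≤ p := by linarith [hsol.one_add_mul_le hN hr0]
  have hsq : p ^ 2 ≤ (r * deriv h r) ^ 2 := by
    have hdrop_nonneg := hsol.tangentDrop_nonneg hN hr0.le
    rw [hsol.tangentDrop_eq, ← hp] at hdrop_nonneg
    gcongr <;> linarith
  have hdamping : N * tangentDrop h 0 r ≤ N * p ^ 2 := by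
    gcongr
    calc tangentDrop h 0 r ≤ μ * r / 4 := by linarith
      _ ≤ 1 * p := by linarith
      _ ≤ p ^ 2 := by rw [sq]; gcongr <;> linarith
  have hhr := hsol.pos r hr0
  refine le_of_mul_le_mul_left ?_ (by positivity : 0 < 2 * r * h r)
  calc 2 * r * h r * (μ / 4) = μ * r * (1 + p) / 2 := by rw [hp]; ring
    _ ≤ p * (p + p) / 2 := by gcongr <;> linarith
    _ = p ^ 2 := by ring
    _ ≤ N * p ^ 2 + (r * deriv h r) ^ 2 - N * tangentDrop h 0 r := by linarith
    _ = 2 * r * h r * deriv (tangentDrop h 0) r := by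
      rw [hsol.two_mul_mul_deriv_tangentDrop hr0, hp]

lemma mul_sub_le_tangentDrop (hsol : IsRealSteadySol N μ h) (hN : 0 ≤ N) (hμ : 0 < μ)
    (hr : 1 / μ ≤ r) : μ / 4 * (r - 1 / μ) ≤ tangentDrop h 0 r := by
  have hμ' : 0 < 1 / μ := one_div_pos.2 hμ
  have hderiv : ∀ x, 1 / μ ≤ x → HasDerivAt (fun y ↦ tangentDrop h 0 y - μ / 4 * (y - 1 / μ))
      (deriv (tangentDrop h 0) x - μ / 4) x := fun x hx ↦ by
    have hlinear := ((hasDerivAt_id' x).sub_const (1 / μ)).const_mul (μ / 4)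
    rw [mul_one] at hlinear
    exact (hsol.differentiableAt_tangentDrop (hμ'.trans_le hx)).hasDerivAt.sub hlinear
  refine sub_nonneg.1 (nonneg_of_forall_neg_deriv_nonneg
    (fun x hx ↦ (hderiv x hx).continuousAt.continuousWithinAt)
    (fun x hx ↦ (hderiv x (le_of_lt hx)).differentiableAt.differentiableWithinAt) ?_ ?_ hr)
  · simpa only [sub_self, mul_zero, sub_zero] using hsol.tangentDrop_nonneg hN hμ'.le
  · intro x hx hneg
    rw [(hderiv x hx.le).deriv, sub_nonneg]
    have hshift : 0 < μ / 4 * (1 / μ) := by positivity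
    exact hsol.div_four_le_deriv_tangentDrop_of_le hN hμ hx.le (by linarith)

lemma tendsto_slope_atTop (hsol : IsRealSteadySol N μ h) (hN : 0 ≤ N) (hμ : 0 < μ) :
    Tendsto (slope h 0) atTop atTop := by
  have hderiv : ∀ r, 0 < r → HasDerivAt (slope h 0) (tangentDrop h 0 r / (r - 0) ^ 2) r :=
    fun r hr ↦ hasDerivAt_slope hr.ne' (hsol.differentiableAt hr)
  refine tendsto_atTop_of_div_le_deriv (c := μ / 8) (by positivity)
    ((eventually_gt_atTop 0).mono fun r hr ↦ (hderiv r hr).differentiableAt) ?_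
  filter_upwards [eventually_gt_atTop 0, eventually_ge_atTop (2 * (1 / μ))] with r hr hr'
  have hμ' : 0 < 1 / μ := one_div_pos.2 hμ
  rw [(hderiv r hr).deriv, sub_zero]
  calc μ / 8 / r = μ / 4 * (r / 2) / r ^ 2 := by field_simp; norm_num
    _ ≤ μ / 4 * (r - 1 / μ) / r ^ 2 := by gcongr; linarith
    _ ≤ tangentDrop h 0 r / r ^ 2 := by
      gcongr
      exact hsol.mul_sub_le_tangentDrop hN hμ (by linarith)

lemma tendsto_deriv_atTop (hsol : IsRealSteadySol N μ h) (hN : 0 ≤ N) (hμ : 0 < μ) :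
    Tendsto (deriv h) atTop atTop :=
  tendsto_atTop_mono' _ ((eventually_gt_atTop 0).mono fun _ hr ↦
    slope_le_deriv_of_tangentDrop_nonneg hr (hsol.tangentDrop_nonneg hN hr.le))
    (hsol.tendsto_slope_atTop hN hμ)

lemma tendsto_atTop (hsol : IsRealSteadySol N μ h) (hN : 0 ≤ N) (hμ : 0 < μ) :
    Tendsto h atTop atTop :=
  tendsto_atTop_mono' _ ((eventually_gt_atTop 0).mono fun _ hr ↦ hsol.one_add_mul_le hN hr)
    (tendsto_atTop_add_const_left _ _ (tendsto_id.const_mul_atTop hμ))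

end IsRealSteadySol

theorem steady_positive_slope_general {N μ : ℝ} (hN : 0 ≤ N) (hμ : 0 < μ) {h : ℝ → ℝ}
    (hsol : IsRealSteadySol N μ h) :
    Tendsto (deriv h) atTop atTop ∧ Tendsto h atTop atTop ∧ ∀ r, 0 < r → 1 + μ * r ≤ h r :=
  ⟨hsol.tendsto_deriv_atTop hN hμ, hsol.tendsto_atTop hN hμ, fun _ hr ↦ hsol.one_add_mul_le hN hr⟩

theorem steady_positive_slope (μ₁ : ℝ) (n : ℕ) (hn2 : 2 ≤ n) (hμ : 0 < μ₁)
    (h : ℝ → ℝ) (hsol : IsSteadySol n μ₁ h) :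
    Filter.Tendsto (deriv h) Filter.atTop Filter.atTop ∧
    Filter.Tendsto h Filter.atTop Filter.atTop ∧
    ∀ r : ℝ, 0 < r → 1 + μ₁ * r ≤ h r :=
  steady_positive_slope_general (sub_nonneg.2 (by exact_mod_cast one_le_two.trans hn2)) hμ
    hsol.isRealSteadySol
end

section
/- Let λ ∈ ℝ, 0 ≤ a < b, and let n ≥ 2 be an integer. Let h ∈ C²((a,b)) be a solution of 2r²h(r)h''(r) = (n-1)h(r)(h(r)-1) + r h'(r)(r h'(r) - λr - (n-1)) with h(r) > 0 on (a,b). Then: (i) if there exists x₀ ∈ (a,b) such that h'(x₀) ≥ 0 and h(x₀) > 1, then h'(x) > 0 for all x ∈ (x₀,b); (ii) if there exists x₀ ∈ (a,b) such that h'(x₀) ≤ 0 and h(x₀) < 1, then h'(x) < 0 for all x ∈ (x₀,b). -/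
open Set Filter Topology

/-!
Where `h' = 0` the equation forces `h''` to have the sign of `h - 1`, so every critical point at
height above `1` is a strict local minimum. If `h'` starts out nonnegative above height `1` and is
nonpositive at some later point `x`, then the maximum of `h` over `[x₀, x]` is attained at a
critical point (endpoints included) of height above `1`, which is absurd. The second claim is the
first one for `-h`.
-/

theorem hasDerivAt_deriv_of_contDiffOn_two {𝕜 F : Type*} [NontriviallyNormedField 𝕜]
    [NormedAddCommGroup F] [NormedSpace 𝕜 F] {f : 𝕜 → F} {s : Set 𝕜} (hs : IsOpen s)
    (hf : ContDiffOn 𝕜 2 f s) {r : 𝕜} (hr : r ∈ s) :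
    HasDerivAt (deriv f) (deriv (deriv f) r) r := by
  have hdiff : DifferentiableOn 𝕜 (deriv f) s :=
    (hf.deriv_of_isOpen (m := 1) hs one_add_one_eq_two.le).differentiableOn one_ne_zero
  exact (hdiff.differentiableAt (hs.mem_nhds hr)).hasDerivAt

theorem not_isMaxOn_of_eventually_lt {X β : Type*} [TopologicalSpace X] [Preorder β]
    {f : X → β} {s : Set X} {y : X} (hy : AccPt y (𝓟 s)) (hlt : ∀ᶠ z in 𝓝[≠] y, f y < f z) :
    ¬ IsMaxOn f s y := by
  intro hmax
  obtain ⟨z, hz, hyz⟩ := ((accPt_iff_frequently_nhdsNE.1 hy).and_eventually hlt).exists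
  exact (hmax hz).not_gt hyz

section MaximumPrinciple

variable {f f' : ℝ → ℝ} {x₀ x y : ℝ}

theorem eventually_lt_of_second_deriv_pos {c : ℝ}
    (hf : ∀ᶠ z in 𝓝 y, HasDerivAt f (f' z) z) (hf' : HasDerivAt f' c y) (hc : 0 < c)
    (hy : f' y = 0) : ∀ᶠ z in 𝓝[≠] y, f y < f z := by
  have sign_f' : ∀ᶠ z in 𝓝 y, SignType.sign (f' z) = SignType.sign (z - y) :=
    eventually_nhdsWithin_sign_eq_of_deriv_pos (hf'.deriv.symm ▸ hc) hy
  obtain ⟨ε, hε, hball⟩ := Metric.eventually_nhds_iff_ball.1 (hf.and sign_f')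
  filter_upwards [nhdsWithin_le_nhds (Metric.ball_mem_nhds y hε), self_mem_nhdsWithin]
    with z hz (hzy : z ≠ y)
  have huIcc : uIcc y z ⊆ Metric.ball y ε :=
    (convex_ball y ε).ordConnected.uIcc_subset (Metric.mem_ball_self hε) hz
  have hderiv : ∀ t ∈ uIcc y z, HasDerivAt f (f' t) t := fun t ht ↦ (hball t (huIcc ht)).1
  have hsign : ∀ t ∈ uIcc y z, SignType.sign (f' t) = SignType.sign (t - y) :=
    fun t ht ↦ (hball t (huIcc ht)).2
  rcases hzy.lt_or_gt with hlt | hgt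
  · rw [uIcc_of_ge hlt.le] at hderiv hsign
    obtain ⟨t, ht, hslope⟩ := exists_hasDerivAt_eq_slope f f' hlt
      (HasDerivAt.continuousOn hderiv) fun t ht ↦ hderiv t (Ioo_subset_Icc_self ht)
    have hneg : f' t < 0 := by
      rw [← sign_eq_neg_one_iff, hsign t (Ioo_subset_Icc_self ht), sign_eq_neg_one_iff]
      exact sub_neg.2 ht.2
    rw [hslope, div_lt_iff₀ (sub_pos.2 hlt), zero_mul] at hneg
    exact sub_neg.1 hneg
  · rw [uIcc_of_le hgt.le] at hderiv hsign
    obtain ⟨t, ht, hslope⟩ := exists_hasDerivAt_eq_slope f f' hgt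
      (HasDerivAt.continuousOn hderiv) fun t ht ↦ hderiv t (Ioo_subset_Icc_self ht)
    have hpos : 0 < f' t := by
      rw [← sign_eq_one_iff, hsign t (Ioo_subset_Icc_self ht), sign_eq_one_iff]
      exact sub_pos.2 ht.1
    rw [hslope, div_pos_iff_of_pos_right (sub_pos.2 hgt)] at hpos
    exact sub_pos.1 hpos

theorem hasDerivAt_eq_zero_of_isMaxOn_Icc (hy : y ∈ Icc x₀ x)
    (hmax : IsMaxOn f (Icc x₀ x) y) (hf : HasDerivAt f (f' y) y) (hx₀ : 0 ≤ f' x₀)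
    (hx : f' x ≤ 0) : f' y = 0 := by
  have mul_sub_nonpos : ∀ z ∈ Icc x₀ x, (z - y) * f' y ≤ 0 := fun z hz ↦ by
    simpa using hmax.localize.hasFDerivWithinAt_nonpos hf.hasDerivWithinAt.hasFDerivWithinAt
      (sub_mem_posTangentConeAt_of_segment_subset ((convex_Icc x₀ x).segment_subset hy hz))
  have hle : x₀ ≤ x := hy.1.trans hy.2
  apply le_antisymm
  · rcases hy.2.eq_or_lt with rfl | hlt
    · exact hx
    · exact nonpos_of_mul_nonpos_right (mul_sub_nonpos x (right_mem_Icc.2 hle)) (sub_pos.2 hlt)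
  · rcases hy.1.eq_or_lt with rfl | hlt
    · exact hx₀
    · exact nonneg_of_mul_nonpos_right (mul_sub_nonpos x₀ (left_mem_Icc.2 hle)) (sub_neg.2 hlt)

theorem hasDerivAt_pos_of_second_deriv_pos_at_critical {f'' : ℝ → ℝ} {a b k : ℝ}
    (hf : ∀ r ∈ Ioo a b, HasDerivAt f (f' r) r) (hf' : ∀ r ∈ Ioo a b, HasDerivAt f' (f'' r) r)
    (hcrit : ∀ r ∈ Ioo a b, f' r = 0 → k < f r → 0 < f'' r)
    (hx₀ : x₀ ∈ Ioo a b) (hf'x₀ : 0 ≤ f' x₀) (hfx₀ : k < f x₀) (hx : x ∈ Ioo x₀ b) :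
    0 < f' x := by
  by_contra! hf'x
  have hsub : Icc x₀ x ⊆ Ioo a b := Icc_subset_Ioo hx₀.1 hx.2
  obtain ⟨y, hy, hmax⟩ := isCompact_Icc.exists_isMaxOn (nonempty_Icc.2 hx.1.le)
    (HasDerivAt.continuousOn fun r hr ↦ hf r (hsub hr))
  have hyab : y ∈ Ioo a b := hsub hy
  have hf'y : f' y = 0 := hasDerivAt_eq_zero_of_isMaxOn_Icc hy hmax (hf y hyab) hf'x₀ hf'x
  have hfy : k < f y := hfx₀.trans_le (hmax (left_mem_Icc.2 hx.1.le))
  have strict_min : ∀ᶠ z in 𝓝[≠] y, f y < f z :=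
    eventually_lt_of_second_deriv_pos (eventually_of_mem (isOpen_Ioo.mem_nhds hyab) hf)
      (hf' y hyab) (hcrit y hyab hf'y hfy) hf'y
  have hacc : AccPt y (𝓟 (Icc x₀ x)) :=
    isPreconnected_Icc.preperfect_of_nontrivial
      (nontrivial_of_lt (left_mem_Icc.2 hx.1.le) (right_mem_Icc.2 hx.1.le) hx.1) y hy
  exact not_isMaxOn_of_eventually_lt hacc strict_min hmax

end MaximumPrinciple

section SecondOrderEquation

variable {a b k : ℝ} {h h' h'' w p q : ℝ → ℝ}

theorem hasDerivAt_pos_of_second_order_eq (hh : ∀ r ∈ Ioo a b, HasDerivAt h (h' r) r)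
    (hh' : ∀ r ∈ Ioo a b, HasDerivAt h' (h'' r) r)
    (hode : ∀ r ∈ Ioo a b, w r * h'' r = q r * (h r - k) + p r * h' r)
    (hw : ∀ r ∈ Ioo a b, 0 ≤ w r) (hq : ∀ r ∈ Ioo a b, 0 < q r) {x₀ : ℝ} (hx₀ : x₀ ∈ Ioo a b)
    (hh'x₀ : 0 ≤ h' x₀) (hhx₀ : k < h x₀) {x : ℝ} (hx : x ∈ Ioo x₀ b) : 0 < h' x := by
  refine hasDerivAt_pos_of_second_deriv_pos_at_critical hh hh' (fun r hr hcrit hk ↦ ?_)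
    hx₀ hh'x₀ hhx₀ hx
  have hmul : w r * h'' r = q r * (h r - k) := by simpa [hcrit] using hode r hr
  exact pos_of_mul_pos_right (hmul ▸ mul_pos (hq r hr) (sub_pos.2 hk)) (hw r hr)

theorem monotonicity_lemma_general (hh : ∀ r ∈ Ioo a b, HasDerivAt h (h' r) r)
    (hh' : ∀ r ∈ Ioo a b, HasDerivAt h' (h'' r) r)
    (hode : ∀ r ∈ Ioo a b, w r * h'' r = q r * (h r - k) + p r * h' r)
    (hw : ∀ r ∈ Ioo a b, 0 ≤ w r) (hq : ∀ r ∈ Ioo a b, 0 < q r) :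
    (∀ x₀ ∈ Ioo a b, 0 ≤ h' x₀ → k < h x₀ → ∀ x ∈ Ioo x₀ b, 0 < h' x) ∧
    (∀ x₀ ∈ Ioo a b, h' x₀ ≤ 0 → h x₀ < k → ∀ x ∈ Ioo x₀ b, h' x < 0) := by
  refine ⟨fun x₀ hx₀ hh'x₀ hhx₀ x hx ↦
    hasDerivAt_pos_of_second_order_eq hh hh' hode hw hq hx₀ hh'x₀ hhx₀ hx,
    fun x₀ hx₀ hh'x₀ hhx₀ x hx ↦ neg_pos.1 ?_⟩
  have hode_neg : ∀ r ∈ Ioo a b, w r * (-h'') r = q r * ((-h) r - -k) + p r * (-h') r :=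
    fun r hr ↦ by simp only [Pi.neg_apply]; linear_combination -hode r hr
  exact hasDerivAt_pos_of_second_order_eq (fun r hr ↦ (hh r hr).neg) (fun r hr ↦ (hh' r hr).neg)
    hode_neg hw hq hx₀ (neg_nonneg.2 hh'x₀) (neg_lt_neg hhx₀) hx

end SecondOrderEquation

theorem monotonicity_lemma (lam : ℝ) (a b : ℝ) (n : ℕ) (ha : 0 ≤ a) (hab : a < b)
    (hn2 : 2 ≤ n) (h : ℝ → ℝ)
    (hreg : ContDiffOn ℝ 2 h (Set.Ioo a b))
    (hode : ∀ r ∈ Set.Ioo a b,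
      2 * r ^ 2 * h r * deriv (deriv h) r =
        ((n : ℝ) - 1) * h r * (h r - 1) +
          r * deriv h r * (r * deriv h r - lam * r - ((n : ℝ) - 1)))
    (hpos : ∀ r ∈ Set.Ioo a b, 0 < h r) :
    (∀ x₀ ∈ Set.Ioo a b, 0 ≤ deriv h x₀ → 1 < h x₀ →
      ∀ x ∈ Set.Ioo x₀ b, 0 < deriv h x) ∧
    (∀ x₀ ∈ Set.Ioo a b, deriv h x₀ ≤ 0 → h x₀ < 1 →
      ∀ x ∈ Set.Ioo x₀ b, deriv h x < 0) := by
  have hn : (0 : ℝ) < n - 1 := sub_pos.2 (Nat.one_lt_cast.2 hn2)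
  exact monotonicity_lemma_general (w := fun r ↦ 2 * r ^ 2 * h r) (q := fun r ↦ (n - 1) * h r)
    (p := fun r ↦ r * (r * deriv h r - lam * r - (n - 1)))
    (fun r hr ↦ ((hreg.differentiableOn two_ne_zero).differentiableAt
      (isOpen_Ioo.mem_nhds hr)).hasDerivAt)
    (fun r hr ↦ hasDerivAt_deriv_of_contDiffOn_two isOpen_Ioo hreg hr)
    (fun r hr ↦ by linear_combination hode r hr)
    (fun r hr ↦ mul_nonneg (by positivity) (hpos r hr).le) (fun r hr ↦ mul_pos hn (hpos r hr))
end

section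
/- Let λ ∈ ℝ and let n ≥ 2 be an integer. Suppose h ∈ C²((0,L)) satisfies 2r²h(r)h''(r) = (n-1)h(r)(h(r)-1) + r h'(r)(r h'(r) - λr - (n-1)) with h(r) > 0 on (0,L), where L ∈ (0,∞) is a constant with L < -(n-1)/λ in case λ < 0. Then there exists a constant c₁ > 0 such that h(r) ≥ c₁ for all r ∈ [L/2, L). -/
open Set Filter Topology

/-!
Write `m = n - 1`. Along a positive solution the quotient `K = (h' - lam - m / r) / √h` satisfies
`K' = m (h + 1) / (2 r² √h) ≥ 0`, so `K` is bounded below by its value `k` at the left endpoint `a`.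
This turns the second-order equation into the first-order inequality `h' ≥ lam + m / L + k √h` on
`[a, L)`. The condition on `L` says that the right-hand side is positive at `h = 0`, so a small
enough level `c ≤ h a` can only be crossed upwards.
-/

section Barrier

variable {f : ℝ → ℝ} {a b : ℝ}

theorem le_of_deriv_pos_of_eq {c : ℝ} (hf : ∀ x ∈ Ico a b, DifferentiableAt ℝ f x)
    (hca : c ≤ f a) (hderiv : ∀ x ∈ Ico a b, f x = c → 0 < deriv f x) :
    ∀ x ∈ Ico a b, c ≤ f x := by
  intro x hx
  have hsub : Icc a x ⊆ Ico a b := Icc_subset_Ico_right hx.2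
  exact image_le_of_deriv_right_lt_deriv_boundary' (f := fun _ ↦ c) (f' := 0) (B' := deriv f)
    continuousOn_const (fun y _ ↦ hasDerivWithinAt_const y _ c) hca
    (fun y hy ↦ (hf y (hsub hy)).continuousAt.continuousWithinAt)
    (fun y hy ↦ (hf y (hsub (Ico_subset_Icc_self hy))).hasDerivAt.hasDerivWithinAt)
    (fun y hy hcy ↦ hderiv y (hsub (Ico_subset_Icc_self hy)) hcy.symm) (right_mem_Icc.2 hx.1)

theorem exists_pos_le_of_comp_le_deriv {φ : ℝ → ℝ} (hf : ∀ x ∈ Ico a b, DifferentiableAt ℝ f x)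
    (hfa : 0 < f a) (hφ : ContinuousAt φ 0) (hφ0 : 0 < φ 0)
    (hderiv : ∀ x ∈ Ico a b, φ (f x) ≤ deriv f x) :
    ∃ c : ℝ, 0 < c ∧ ∀ x ∈ Ico a b, c ≤ f x := by
  have hφ_pos : ∀ᶠ c in 𝓝[>] 0, 0 < φ c :=
    (hφ.eventually (lt_mem_nhds hφ0)).filter_mono nhdsWithin_le_nhds
  obtain ⟨c, hφc, hc, hca⟩ := (hφ_pos.and (Ioo_mem_nhdsGT hfa)).exists
  refine ⟨c, hc, le_of_deriv_pos_of_eq hf hca.le fun x hx hxc ↦ ?_⟩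
  calc 0 < φ (f x) := by rwa [hxc]
    _ ≤ deriv f x := hderiv x hx

end Barrier

/-- `h` is a positive, twice differentiable solution on `s` of
`2 r² h h'' = m h (h - 1) + r h' (r h' - lam r - m)`, where the real parameter `m` stands for
`n - 1`. Derivatives are two-sided at every point of `s`, even if `s` is not open. -/
structure IsPositiveSolutionOn (m lam : ℝ) (h : ℝ → ℝ) (s : Set ℝ) : Prop where
  differentiableAt : ∀ r ∈ s, DifferentiableAt ℝ h r
  differentiableAt_deriv : ∀ r ∈ s, DifferentiableAt ℝ (deriv h) r
  pos : ∀ r ∈ s, 0 < h r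
  ode : ∀ r ∈ s, 2 * r ^ 2 * h r * deriv (deriv h) r =
    m * h r * (h r - 1) + r * deriv h r * (r * deriv h r - lam * r - m)

/-- The quotient `(h' - (lam + m / r)) / √h`, which is monotone along positive solutions. -/
noncomputable def normalizedSlope (m lam : ℝ) (h : ℝ → ℝ) (r : ℝ) : ℝ :=
  (deriv h r - (lam + m / r)) / √(h r)

namespace IsPositiveSolutionOn

variable {m lam : ℝ} {h : ℝ → ℝ} {s t : Set ℝ}

theorem of_contDiffOn (hs : IsOpen s) (hreg : ContDiffOn ℝ 2 h s) (hpos : ∀ r ∈ s, 0 < h r)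
    (hode : ∀ r ∈ s, 2 * r ^ 2 * h r * deriv (deriv h) r =
      m * h r * (h r - 1) + r * deriv h r * (r * deriv h r - lam * r - m)) :
    IsPositiveSolutionOn m lam h s where
  differentiableAt _ hr :=
    (hreg.differentiableOn two_ne_zero).differentiableAt (hs.mem_nhds hr)
  differentiableAt_deriv _ hr :=
    ((hreg.deriv_of_isOpen (m := 1) hs one_add_one_eq_two.le).differentiableOn
      one_ne_zero).differentiableAt (hs.mem_nhds hr)
  pos := hpos
  ode := hode

theorem mono (hh : IsPositiveSolutionOn m lam h t) (hst : s ⊆ t) :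
    IsPositiveSolutionOn m lam h s where
  differentiableAt r hr := hh.differentiableAt r (hst hr)
  differentiableAt_deriv r hr := hh.differentiableAt_deriv r (hst hr)
  pos r hr := hh.pos r (hst hr)
  ode r hr := hh.ode r (hst hr)

theorem hasDerivAt_normalizedSlope (hh : IsPositiveSolutionOn m lam h s) {r : ℝ} (hr : r ∈ s)
    (hr0 : r ≠ 0) :
    HasDerivAt (normalizedSlope m lam h) (m * (h r + 1) / (2 * r ^ 2 * √(h r))) r := by
  have hpos : 0 < h r := hh.pos r hr
  have hsqrt : √(h r) ≠ 0 := (Real.sqrt_pos.2 hpos).ne'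
  have hsq : h r = √(h r) ^ 2 := (Real.sq_sqrt hpos.le).symm
  have hnum : HasDerivAt (fun x ↦ deriv h x - (lam + m / x))
      (deriv (deriv h) r + m / r ^ 2) r := by
    have hinv : HasDerivAt (fun x ↦ lam + m / x) (m * -(r ^ 2)⁻¹) r :=
      ((hasDerivAt_inv hr0).const_mul m).const_add lam
    exact ((hh.differentiableAt_deriv r hr).hasDerivAt.sub hinv).congr_deriv (by ring)
  have hden : HasDerivAt (fun x ↦ √(h x)) (deriv h r / (2 * √(h r))) r :=
    (hh.differentiableAt r hr).hasDerivAt.sqrt hpos.ne'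
  have hsecond : deriv (deriv h) r = (m * h r * (h r - 1) +
      r * deriv h r * (r * deriv h r - lam * r - m)) / (2 * r ^ 2 * h r) := by
    rw [← hh.ode r hr]
    field_simp
  refine (hnum.div hden hsqrt).congr_deriv ?_
  rw [hsecond]
  generalize √(h r) = q at hsqrt hsq ⊢
  rw [hsq]
  field_simp
  ring

theorem monotoneOn_normalizedSlope (hh : IsPositiveSolutionOn m lam h s) (hm : 0 ≤ m)
    (hs : Convex ℝ s) (hs0 : 0 ∉ s) : MonotoneOn (normalizedSlope m lam h) s := by
  have hderiv : ∀ r ∈ s, HasDerivAt (normalizedSlope m lam h)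
      (m * (h r + 1) / (2 * r ^ 2 * √(h r))) r := fun r hr ↦
    hh.hasDerivAt_normalizedSlope hr (ne_of_mem_of_not_mem hr hs0)
  refine monotoneOn_of_hasDerivWithinAt_nonneg hs
    (fun r hr ↦ (hderiv r hr).continuousAt.continuousWithinAt)
    (fun r hr ↦ (hderiv r (interior_subset hr)).hasDerivWithinAt) fun r hr ↦ ?_
  have := hh.pos r (interior_subset hr)
  positivity

theorem add_normalizedSlope_mul_sqrt_le_deriv {a L : ℝ}
    (hh : IsPositiveSolutionOn m lam h (Ico a L)) (hm : 0 ≤ m) (ha : 0 < a) :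
    ∀ r ∈ Ico a L, lam + m / L + normalizedSlope m lam h a * √(h r) ≤ deriv h r := by
  intro r hr
  have hsqrt : 0 < √(h r) := Real.sqrt_pos.2 (hh.pos r hr)
  have hslope : normalizedSlope m lam h a ≤ normalizedSlope m lam h r :=
    hh.monotoneOn_normalizedSlope hm (convex_Ico a L) (fun h0 ↦ ha.not_ge h0.1)
      (left_mem_Ico.2 (hr.1.trans_lt hr.2)) hr hr.1
  calc lam + m / L + normalizedSlope m lam h a * √(h r)
      ≤ lam + m / r + normalizedSlope m lam h r * √(h r) := by
        have hr_pos : 0 < r := ha.trans_le hr.1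
        have hrL : r ≤ L := hr.2.le
        gcongr
    _ = deriv h r := by
        rw [normalizedSlope, div_mul_cancel₀ _ hsqrt.ne']
        ring

end IsPositiveSolutionOn

theorem add_div_pos_of_lt_neg_div {lam m L : ℝ} (hm : 0 < m) (hL : 0 < L)
    (hLlam : lam < 0 → L < -m / lam) : 0 < lam + m / L := by
  rcases lt_or_ge lam 0 with hlam | hlam
  · have hmul : -m < L * lam := (lt_div_iff_of_neg hlam).1 (hLlam hlam)
    have hdiv : -lam < m / L := (lt_div_iff₀ hL).2 (by linarith)
    linarith
  · positivity

theorem uniform_lower_bound_general {m lam a L : ℝ} {h : ℝ → ℝ} (hm : 0 ≤ m) (ha : 0 < a)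
    (haL : a < L) (hL : 0 < lam + m / L) (hh : IsPositiveSolutionOn m lam h (Ico a L)) :
    ∃ c : ℝ, 0 < c ∧ ∀ r ∈ Ico a L, c ≤ h r :=
  exists_pos_le_of_comp_le_deriv (φ := fun y ↦ lam + m / L + normalizedSlope m lam h a * √y)
    hh.differentiableAt (hh.pos a (left_mem_Ico.2 haL)) (by fun_prop) (by simpa using hL)
    (hh.add_normalizedSlope_mul_sqrt_le_deriv hm ha)

theorem uniform_lower_bound (lam : ℝ) (n : ℕ) (hn2 : 2 ≤ n) (L : ℝ) (hL : 0 < L)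
    (hLlam : lam < 0 → L < -((n : ℝ) - 1) / lam) (h : ℝ → ℝ)
    (hreg : ContDiffOn ℝ 2 h (Set.Ioo 0 L))
    (hode : ∀ r ∈ Set.Ioo (0 : ℝ) L,
      2 * r ^ 2 * h r * deriv (deriv h) r =
        ((n : ℝ) - 1) * h r * (h r - 1) +
          r * deriv h r * (r * deriv h r - lam * r - ((n : ℝ) - 1)))
    (hpos : ∀ r ∈ Set.Ioo (0 : ℝ) L, 0 < h r) :
    ∃ c₁ : ℝ, 0 < c₁ ∧ ∀ r ∈ Set.Ico (L / 2) L, c₁ ≤ h r := by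
  have hm : (0 : ℝ) < n - 1 := sub_pos.2 (by exact_mod_cast hn2)
  exact uniform_lower_bound_general hm.le (half_pos hL) (half_lt_self hL)
    (add_div_pos_of_lt_neg_div hm hL hLlam)
    ((IsPositiveSolutionOn.of_contDiffOn isOpen_Ioo hreg hpos hode).mono
      (Ico_subset_Ioo_left (half_pos hL)))
end

section
/- Let λ, μ₁ ∈ ℝ and let n ≥ 2 be an integer. Then there exists a constant ε > 0 such that the equation 2r²h(r)h''(r) = (n-1)h(r)(h(r)-1) + r h'(r)(r h'(r) - λr - (n-1)), h(r) > 0, has a unique solution h which is real-analytic on [0,ε) and satisfies h(0) = 1 and h'(0) = μ₁. -/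
open Set Filter Topology

/-- `h` is a real-analytic solution on `[0,ε)` of
`2r²h h'' = (n-1)h(h-1) + r h'(r h' - λr - (n-1))`, `h > 0` on `(0,ε)`,
with `h(0) = 1` and `h'(0) = μ₁`. -/
def IsAnalyticSolOn (n : ℕ) (lam μ₁ ε : ℝ) (h : ℝ → ℝ) : Prop :=
  AnalyticOn ℝ h (Set.Ico 0 ε) ∧
  (∀ r ∈ Set.Ioo (0 : ℝ) ε,
    2 * r ^ 2 * h r * deriv (deriv h) r =
      ((n : ℝ) - 1) * h r * (h r - 1) +
        r * deriv h r * (r * deriv h r - lam * r - ((n : ℝ) - 1)) ∧ 0 < h r) ∧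
  h 0 = 1 ∧ derivWithin h (Set.Ici 0) 0 = μ₁

/-!
Taylor expansion at the singular point `r = 0` turns the equation for `h = ∑ cₖ rᵏ` into a
recursion. The `k`-th coefficient of the equation is `(2k + m)(k - 1) cₖ`, where `m = n - 1`, minus
an expression in lower coefficients that is quadratic in them with weights of size `O(k²)`. For
`k = 1` the factor vanishes, which leaves `c₁ = μ₁` free; for `k ≥ 2` it does not, so there is
exactly one formal solution. Since the factor also grows like `k²`, the coefficients satisfy
`|cₖ₊₂| ≤ A |cₖ₊₁| + B ∑ |cᵢ₊₁| |cⱼ₊₁|` with `i + j = k`, and such a quadratic recursion has bounded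
weighted partial sums for a small enough radius. Hence the formal solution converges. An analytic
germ is determined by its Taylor series, and the identity theorem carries uniqueness from the germ
at `0` to `[0, ε)`.
-/

open PowerSeries
open Finset.HasAntidiagonal (antidiagonal)
open scoped ContDiff

section TaylorSeries

variable {𝕜 : Type*} [NontriviallyNormedField 𝕜] {f g : 𝕜 → 𝕜} {x : 𝕜}

/-- The Taylor series of `f` at `x` as a formal power series. Since `iteratedDeriv` is total, this
is meaningful only for functions that are smooth at `x`. -/
noncomputable def taylorSeries (f : 𝕜 → 𝕜) (x : 𝕜) : 𝕜⟦X⟧ :=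
  PowerSeries.mk fun k ↦ iteratedDeriv k f x / k.factorial

theorem coeff_taylorSeries (f : 𝕜 → 𝕜) (x : 𝕜) (k : ℕ) :
    coeff k (taylorSeries f x) = iteratedDeriv k f x / k.factorial :=
  coeff_mk _ _

theorem constantCoeff_taylorSeries (f : 𝕜 → 𝕜) (x : 𝕜) :
    constantCoeff (taylorSeries f x) = f x := by
  simp [← coeff_zero_eq_constantCoeff_apply, coeff_taylorSeries]

theorem coeff_one_taylorSeries (f : 𝕜 → 𝕜) (x : 𝕜) : coeff 1 (taylorSeries f x) = deriv f x := by
  simp [coeff_taylorSeries]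

theorem taylorSeries_const (c x : 𝕜) : taylorSeries (fun _ ↦ c) x = C c := by
  ext k
  rcases eq_or_ne k 0 with rfl | hk <;> simp [coeff_taylorSeries, iteratedDeriv_const, coeff_C, *]

theorem taylorSeries_id (x : 𝕜) : taylorSeries (fun r ↦ r) x = C x + X := by
  ext k
  rcases k with _ | _ | k <;>
    simp [coeff_taylorSeries, iteratedDeriv_fun_id, coeff_X]

theorem taylorSeries_add (hf : ContDiffAt 𝕜 ∞ f x) (hg : ContDiffAt 𝕜 ∞ g x) :
    taylorSeries (fun r ↦ f r + g r) x = taylorSeries f x + taylorSeries g x := by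
  ext k
  simp [coeff_taylorSeries, iteratedDeriv_fun_add (hf.of_le (mod_cast le_top))
    (hg.of_le (mod_cast le_top)), add_div]

theorem taylorSeries_sub (hf : ContDiffAt 𝕜 ∞ f x) (hg : ContDiffAt 𝕜 ∞ g x) :
    taylorSeries (fun r ↦ f r - g r) x = taylorSeries f x - taylorSeries g x := by
  ext k
  simp [coeff_taylorSeries, iteratedDeriv_fun_sub (hf.of_le (mod_cast le_top))
    (hg.of_le (mod_cast le_top)), sub_div]

variable [CharZero 𝕜]

theorem taylorSeries_mul (hf : ContDiffAt 𝕜 ∞ f x) (hg : ContDiffAt 𝕜 ∞ g x) :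
    taylorSeries (fun r ↦ f r * g r) x = taylorSeries f x * taylorSeries g x := by
  ext k
  simp only [coeff_mul, coeff_taylorSeries]
  rw [iteratedDeriv_fun_mul (hf.of_le (mod_cast le_top)) (hg.of_le (mod_cast le_top)),
    Finset.Nat.sum_antidiagonal_eq_sum_range_succ_mk, Finset.sum_div]
  refine Finset.sum_congr rfl fun i hi ↦ ?_
  rw [Nat.cast_choose 𝕜 (Finset.mem_range_succ_iff.1 hi)]
  field [Nat.factorial_ne_zero]

theorem taylorSeries_deriv (f : 𝕜 → 𝕜) (x : 𝕜) :
    taylorSeries (deriv f) x = derivative 𝕜 (taylorSeries f x) := by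
  ext k
  simp only [coeff_derivative, coeff_taylorSeries, iteratedDeriv_succ', Nat.factorial_succ]
  push_cast
  field [Nat.factorial_ne_zero]

variable [CompleteSpace 𝕜]

theorem taylorSeries_eq_iff_eventuallyEq (hf : AnalyticAt 𝕜 f x) (hg : AnalyticAt 𝕜 g x) :
    taylorSeries f x = taylorSeries g x ↔ f =ᶠ[𝓝 x] g := by
  refine ⟨fun h ↦ ?_, fun h ↦ ?_⟩
  · have hcoeff : (fun k ↦ iteratedDeriv k f x / k.factorial) =
        fun k ↦ iteratedDeriv k g x / k.factorial := by
      funext k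
      simpa only [coeff_taylorSeries] using congrArg (coeff k) h
    have hsub := hf.hasFPowerSeriesAt.sub hg.hasFPowerSeriesAt
    rw [hcoeff, sub_self] at hsub
    exact hsub.eventually_eq_zero.mono fun _ ↦ sub_eq_zero.1
  · ext k
    rw [coeff_taylorSeries, coeff_taylorSeries, h.iteratedDeriv_eq]

theorem exists_analyticAt_taylorSeries_eq {φ : 𝕜⟦X⟧} {ρ : ℝ} (hρ : 0 < ρ)
    (hφ : Summable fun k ↦ ‖coeff k φ‖ * ρ ^ k) :
    ∃ f : 𝕜 → 𝕜, AnalyticAt 𝕜 f 0 ∧ taylorSeries f 0 = φ := by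
  lift ρ to NNReal using hρ.le
  set p := FormalMultilinearSeries.ofScalars 𝕜 fun k ↦ coeff k φ
  have hradius : 0 < p.radius := by
    refine lt_of_lt_of_le (by exact_mod_cast hρ) (p.le_radius_of_summable (r := ρ) ?_)
    simpa only [p, FormalMultilinearSeries.ofScalars_norm] using hφ
  have hp : HasFPowerSeriesAt p.sum p 0 := (p.hasFPowerSeriesOnBall hradius).hasFPowerSeriesAt
  refine ⟨p.sum, hp.analyticAt, ?_⟩
  have hseries := hp.analyticAt.hasFPowerSeriesAt.eq_formalMultilinearSeries hp
  have hcoeff := FormalMultilinearSeries.ofScalars_series_injective 𝕜 𝕜 hseries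
  ext k
  rw [coeff_taylorSeries]
  exact congrFun hcoeff k

end TaylorSeries

section OneSided

variable {E : Type*} [NormedAddCommGroup E] [NormedSpace ℝ E] {f g : ℝ → E} {a b : ℝ}

theorem eventuallyEq_nhds_of_nhdsGT (hf : AnalyticAt ℝ f a) (hg : AnalyticAt ℝ g a)
    (h : f =ᶠ[𝓝[>] a] g) : f =ᶠ[𝓝 a] g :=
  (hf.frequently_eq_iff_eventually_eq hg).1 <|
    h.frequently.filter_mono (nhdsWithin_mono _ fun _ hr ↦ ne_of_gt hr)

theorem eqOn_Ico_of_eventuallyEq_nhdsGE (hf : AnalyticOn ℝ f (Ico a b))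
    (hg : AnalyticOn ℝ g (Ico a b)) (h : f =ᶠ[𝓝[≥] a] g) : EqOn f g (Ico a b) := by
  intro r hr
  rcases hr.1.eq_or_lt with rfl | har
  · exact h.eq_of_nhdsWithin self_mem_Ici
  have hanalytic {u : ℝ → E} (hu : AnalyticOn ℝ u (Ico a b)) : AnalyticOnNhd ℝ u (Ioo a b) :=
    isOpen_Ioo.analyticOn_iff_analyticOnNhd.1 (hu.mono Ioo_subset_Ico_self)
  have hlocal : ∀ᶠ z in 𝓝[>] a, f =ᶠ[𝓝 z] g := by
    have h' : ∀ᶠ z in 𝓝[>] a, f z = g z := h.filter_mono (nhdsWithin_mono _ Ioi_subset_Ici_self)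
    filter_upwards [eventually_eventually_nhdsWithin.2 h', self_mem_nhdsWithin] with z hz haz
    rwa [isOpen_Ioi.nhdsWithin_eq haz] at hz
  obtain ⟨z, hz, hzmem⟩ := (hlocal.and (Ioo_mem_nhdsGT (har.trans hr.2))).exists
  exact (hanalytic hf).eqOn_of_preconnected_of_eventuallyEq (hanalytic hg) isPreconnected_Ioo
    hzmem hz ⟨har, hr.2⟩

theorem derivWithin_Ici_eq_deriv (hf : DifferentiableAt ℝ f a) :
    derivWithin f (Ici a) a = deriv f a :=
  hf.derivWithin (uniqueDiffOn_Ici a a self_mem_Ici)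

end OneSided

section Recursion

theorem existsUnique_of_recursion {α : Type*} (F : ℕ → (ℕ → α) → α)
    (hF : ∀ k a b, (∀ i ≤ k, a i = b i) → F k a = F k b) (c : α) :
    ∃! a : ℕ → α, a 0 = c ∧ ∀ k, a (k + 1) = F k a := by
  let step (n : ℕ) (prev : ∀ i < n, α) : α :=
    match n, prev with
    | 0, _ => c
    | k + 1, prev => F k fun i ↦ if hi : i < k + 1 then prev i hi else c
  let a : ℕ → α := fun n ↦ Nat.strongRec step n
  have ha (n : ℕ) : a n = step n fun i _ ↦ a i := Nat.strongRec_eq _ _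
  refine ⟨a, ⟨ha 0, fun k ↦ ?_⟩, fun b ⟨hb0, hb⟩ ↦ ?_⟩
  · rw [ha]
    exact hF k _ _ fun i hi ↦ dif_pos (Nat.lt_succ_of_le hi)
  · funext n
    induction n using Nat.strong_induction_on with
    | _ n ih =>
      rcases n with _ | k
      · exact hb0.trans (ha 0).symm
      · rw [hb, ha]
        refine hF k _ _ fun i hi ↦ ?_
        rw [ih i (Nat.lt_succ_of_le hi), dif_pos (Nat.lt_succ_of_le hi)]

theorem sum_range_sum_antidiagonal_mul_le {R : Type*} [CommSemiring R] [PartialOrder R]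
    [IsOrderedRing R] {f g : ℕ → R} (hf : ∀ k, 0 ≤ f k) (hg : ∀ k, 0 ≤ g k) (N : ℕ) :
    ∑ k ∈ Finset.range N, ∑ p ∈ antidiagonal k, f p.1 * g p.2 ≤
      (∑ k ∈ Finset.range N, f k) * ∑ k ∈ Finset.range N, g k := by
  have hfiber : ∀ k ∈ Finset.range N, ∑ p ∈ antidiagonal k, f p.1 * g p.2 =
      ∑ p ∈ Finset.range N ×ˢ Finset.range N with p.1 + p.2 = k, f p.1 * g p.2 := by
    intro k hk
    refine Finset.sum_congr ?_ fun _ _ ↦ rfl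
    ext p
    simp only [Finset.HasAntidiagonal.mem_antidiagonal, Finset.mem_filter, Finset.mem_product,
      Finset.mem_range] at hk ⊢
    omega
  rw [Finset.sum_congr rfl hfiber, Finset.sum_fiberwise_eq_sum_filter, Finset.sum_mul_sum,
    ← Finset.sum_product']
  exact Finset.sum_le_sum_of_subset_of_nonneg (Finset.filter_subset _ _)
    fun p _ _ ↦ mul_nonneg (hf _) (hg _)

theorem sum_range_le_of_quadratic_recursion {w : ℕ → ℝ} {A B M : ℝ} (hw : ∀ k, 0 ≤ w k)
    (hA : 0 ≤ A) (hB : 0 ≤ B)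
    (hrec : ∀ k, w (k + 1) ≤ A * w k + B * ∑ p ∈ antidiagonal k, w p.1 * w p.2)
    (hM : w 0 + A * M + B * M ^ 2 ≤ M) (hM0 : 0 ≤ M) (N : ℕ) : ∑ k ∈ Finset.range N, w k ≤ M := by
  induction N with
  | zero => simpa using hM0
  | succ N ih =>
    set S := ∑ k ∈ Finset.range N, w k
    have hS0 : 0 ≤ S := Finset.sum_nonneg fun k _ ↦ hw k
    calc ∑ k ∈ Finset.range (N + 1), w k
        = w 0 + ∑ k ∈ Finset.range N, w (k + 1) := by rw [Finset.sum_range_succ', add_comm]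
      _ ≤ w 0 + ∑ k ∈ Finset.range N,
            (A * w k + B * ∑ p ∈ antidiagonal k, w p.1 * w p.2) := by
          gcongr with k; exact hrec k
      _ = w 0 + A * S +
            B * ∑ k ∈ Finset.range N, ∑ p ∈ antidiagonal k, w p.1 * w p.2 := by
          rw [Finset.sum_add_distrib, ← Finset.mul_sum, ← Finset.mul_sum, add_assoc]
      _ ≤ w 0 + A * S + B * (S * S) := by
          gcongr; exact sum_range_sum_antidiagonal_mul_le hw hw N
      _ ≤ w 0 + A * M + B * M ^ 2 := by rw [← sq]; gcongr
      _ ≤ M := hM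

theorem exists_summable_mul_pow_of_quadratic_recursion {w : ℕ → ℝ} {A B : ℝ} (hw : ∀ k, 0 ≤ w k)
    (hA : 0 ≤ A) (hB : 0 ≤ B)
    (hrec : ∀ k, w (k + 1) ≤ A * w k + B * ∑ p ∈ antidiagonal k, w p.1 * w p.2) :
    ∃ ρ : ℝ, 0 < ρ ∧ Summable fun k ↦ w k * ρ ^ k := by
  set M := w 0 + 1
  have hM0 : 0 ≤ M := add_nonneg (hw 0) zero_le_one
  set ρ := (A * M + B * M ^ 2 + 1)⁻¹ with hρ
  have hρ0 : 0 < ρ := by positivity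
  have hbound : ρ * A * M + ρ * B * M ^ 2 ≤ 1 := by
    rw [show ρ * A * M + ρ * B * M ^ 2 = (A * M + B * M ^ 2) / (A * M + B * M ^ 2 + 1) by
      rw [hρ]; ring, div_le_one (by positivity)]
    linarith
  refine ⟨ρ, hρ0, summable_of_sum_range_le (c := M) (fun k ↦ by have := hw k; positivity)
    (sum_range_le_of_quadratic_recursion (A := ρ * A) (B := ρ * B)
      (fun k ↦ by have := hw k; positivity) (by positivity) (by positivity) (fun k ↦ ?_)
      (by rw [pow_zero, mul_one]; linarith) hM0)⟩
  have hscale : ∑ p ∈ antidiagonal k, w p.1 * ρ ^ p.1 * (w p.2 * ρ ^ p.2) =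
      (∑ p ∈ antidiagonal k, w p.1 * w p.2) * ρ ^ k := by
    rw [Finset.sum_mul]
    refine Finset.sum_congr rfl fun p hp ↦ ?_
    rw [← Finset.HasAntidiagonal.mem_antidiagonal.1 hp]
    ring
  calc w (k + 1) * ρ ^ (k + 1)
      ≤ (A * w k + B * ∑ p ∈ antidiagonal k, w p.1 * w p.2) * ρ ^ (k + 1) := by
        gcongr; exact hrec k
    _ = _ := by rw [hscale]; ring

end Recursion

section FormalSolutions

variable {R : Type*} [CommRing R]

/-- Left-hand side minus right-hand side of the equation, as a polynomial in the values of `r`, `h`,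
`h'` and `h''`, with `m` in place of `n - 1`. It is used both for real numbers and for formal power
series. -/
def odeDefect (m lam r h h' h'' : R) : R :=
  2 * r ^ 2 * h * h'' - (m * h * (h - 1) + r * h' * (r * h' - lam * r - m))

/-- The result of substituting the power series `φ` for `h` and the indeterminate for `r` in the
equation. -/
noncomputable def formalDefect (m lam : R) (φ : R⟦X⟧) : R⟦X⟧ :=
  odeDefect (C m) (C lam) X φ (derivative R φ) (derivative R (derivative R φ))

/-- The indicial polynomial of the equation at `r = 0`: the factor of the `k`-th coefficient of `h`
in the `k`-th coefficient of the defect. -/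
def indicial (m : R) (k : ℕ) : R := (2 * k + m) * (k - 1)

/-- The coefficient of `cᵢ cⱼ`, where `h = ∑ cₖ rᵏ`, in the part `m h² + (r h')² - 2 r² h h''` of
the equation that is quadratic in `h`. -/
def quadraticWeight (m : R) (i j : ℕ) : R := m + i * j - 2 * j * (j - 1)

/-- The remaining terms of the coefficient of degree `k + 2` of the defect, for the power series
`h = 1 + ∑ aᵢ rⁱ⁺¹`. The shift makes the quadratic part a plain Cauchy-type sum. -/
def lowerOrderTerms (m lam : R) (a : ℕ → R) (k : ℕ) : R :=
  ∑ p ∈ antidiagonal k, quadraticWeight m (p.1 + 1) (p.2 + 1) * (a p.1 * a p.2) -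
    lam * ((k + 1) * a k)

theorem lowerOrderTerms_congr (m lam : R) {a b : ℕ → R} {k : ℕ} (h : ∀ i ≤ k, a i = b i) :
    lowerOrderTerms m lam a k = lowerOrderTerms m lam b k := by
  unfold lowerOrderTerms
  rw [h k le_rfl]
  congr 1
  refine Finset.sum_congr rfl fun p hp ↦ ?_
  rw [h p.1 (Finset.HasAntidiagonal.antidiagonal.fst_le hp),
    h p.2 (Finset.HasAntidiagonal.antidiagonal.snd_le hp)]

theorem coeff_X_mul_derivative (φ : R⟦X⟧) (k : ℕ) :
    coeff k (X * derivative R φ) = k * coeff k φ := by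
  rcases k with _ | k
  · simp
  · rw [coeff_succ_X_mul, coeff_derivative]
    push_cast
    ring

theorem coeff_X_sq_mul_derivative_derivative (φ : R⟦X⟧) (k : ℕ) :
    coeff k (X ^ 2 * derivative R (derivative R φ)) = k * (k - 1) * coeff k φ := by
  have h : X ^ 2 * derivative R (derivative R φ) =
      X * derivative R (X * derivative R φ) - X * derivative R φ := by
    simp only [Derivation.leibniz, derivative_X, smul_eq_mul]
    ring
  rw [h, map_sub, coeff_X_mul_derivative, coeff_X_mul_derivative]
  ring

theorem coeff_formalDefect (m lam : R) (φ : R⟦X⟧) (k : ℕ) :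
    coeff k (formalDefect m lam φ) =
      m * (k + 1) * coeff k φ + lam * coeff k (X * (X * derivative R φ)) -
        ∑ p ∈ antidiagonal k, quadraticWeight m p.1 p.2 * (coeff p.1 φ * coeff p.2 φ) := by
  have h : formalDefect m lam φ =
      C m * φ + C m * (X * derivative R φ) + C lam * (X * (X * derivative R φ)) -
        (C m * (φ * φ) + X * derivative R φ * (X * derivative R φ) -
          C 2 * (φ * (X ^ 2 * derivative R (derivative R φ)))) := by
    rw [formalDefect, odeDefect, map_ofNat]
    ring
  simp only [h, map_add, map_sub, coeff_C_mul, coeff_mul _ φ, coeff_mul _ (X * derivative R φ),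
    coeff_X_mul_derivative, coeff_X_sq_mul_derivative_derivative, Finset.mul_sum,
    ← Finset.sum_add_distrib, ← Finset.sum_sub_distrib]
  congr 1
  · ring
  · exact Finset.sum_congr rfl fun p _ ↦ by rw [quadraticWeight]; ring

variable {m lam : R} {φ : R⟦X⟧}

theorem coeff_zero_formalDefect (hφ : constantCoeff φ = 1) :
    coeff 0 (formalDefect m lam φ) = 0 := by
  simp [coeff_formalDefect, quadraticWeight, hφ]

theorem coeff_one_formalDefect (hφ : constantCoeff φ = 1) :
    coeff 1 (formalDefect m lam φ) = 0 := by
  have hX : coeff 1 (X * (X * derivative R φ)) = 0 := by simp [coeff_succ_X_mul]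
  rw [coeff_formalDefect, hX, Finset.Nat.antidiagonal_succ, Finset.sum_cons,
    Finset.Nat.antidiagonal_zero, Finset.map_singleton, Finset.sum_singleton]
  simp only [quadraticWeight, Function.Embedding.coe_prodMap, Function.Embedding.coeFn_mk,
    Function.Embedding.refl_apply, Prod.map_apply, coeff_zero_eq_constantCoeff_apply, hφ,
    Nat.succ_eq_add_one, Nat.cast_one, Nat.cast_zero, zero_add]
  ring

theorem coeff_add_two_formalDefect (hφ : constantCoeff φ = 1) (k : ℕ) :
    coeff (k + 2) (formalDefect m lam φ) = indicial m (k + 2) * coeff (k + 2) φ -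
      lowerOrderTerms m lam (fun i ↦ coeff (i + 1) φ) k := by
  have hX : coeff (k + 2) (X * (X * derivative R φ)) = (k + 1) * coeff (k + 1) φ := by
    rw [coeff_succ_X_mul, coeff_X_mul_derivative, Nat.cast_succ]
  rw [coeff_formalDefect, hX, Finset.Nat.antidiagonal_succ_succ', Finset.sum_cons, Finset.sum_cons,
    Finset.sum_map]
  simp only [indicial, lowerOrderTerms, quadraticWeight, Function.Embedding.coe_prodMap,
    Function.Embedding.coeFn_mk, Prod.map_fst, Prod.map_snd, coeff_zero_eq_constantCoeff_apply,
    hφ, Nat.succ_eq_add_one, Nat.cast_add, Nat.cast_one, Nat.cast_ofNat, Nat.cast_zero,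
    add_sub_cancel_right]
  ring

theorem formalDefect_eq_zero_iff (hφ : constantCoeff φ = 1) :
    formalDefect m lam φ = 0 ↔ ∀ k, indicial m (k + 2) * coeff (k + 2) φ =
      lowerOrderTerms m lam (fun i ↦ coeff (i + 1) φ) k := by
  refine ⟨fun h k ↦ ?_, fun h ↦ ?_⟩
  · rw [← sub_eq_zero, ← coeff_add_two_formalDefect hφ, h, map_zero]
  · ext k
    rcases k with _ | _ | k
    · exact coeff_zero_formalDefect hφ
    · exact coeff_one_formalDefect hφ
    · rw [coeff_add_two_formalDefect hφ, h, sub_self, map_zero]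

theorem existsUnique_formalDefect_eq_zero {K : Type*} [Field K] {m : K}
    (hm : ∀ k : ℕ, indicial m (k + 2) ≠ 0) (lam μ₁ : K) :
    ∃! φ : K⟦X⟧, formalDefect m lam φ = 0 ∧ constantCoeff φ = 1 ∧ coeff 1 φ = μ₁ := by
  obtain ⟨a, ⟨ha0, ha⟩, hunique⟩ := existsUnique_of_recursion
    (fun k a ↦ lowerOrderTerms m lam a k / indicial m (k + 2))
    (fun k a b h ↦ by rw [lowerOrderTerms_congr m lam h]) μ₁
  have hcoeff (k : ℕ) : coeff (k + 1) (X * PowerSeries.mk a + C 1) = a k := by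
    simp [coeff_succ_X_mul]
  refine ⟨X * PowerSeries.mk a + C 1, ⟨?_, by simp, (hcoeff 0).trans ha0⟩, ?_⟩
  · rw [formalDefect_eq_zero_iff (by simp)]
    intro k
    simp only [hcoeff, ha k]
    exact mul_div_cancel₀ _ (hm k)
  · rintro φ ⟨hφ, hφ0, hφ1⟩
    have hφa : (fun k ↦ coeff (k + 1) φ) = a := hunique _ ⟨hφ1, fun k ↦
      eq_div_of_mul_eq (hm k) (mul_comm _ (indicial m (k + 2)) ▸
        (formalDefect_eq_zero_iff hφ0).1 hφ k)⟩
    rw [eq_X_mul_shift_add_const φ, hφa, hφ0]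

end FormalSolutions

section Convergence

theorem exists_sq_le_mul_abs_indicial {m : ℝ} (hm : ∀ k : ℕ, indicial m (k + 2) ≠ 0) :
    ∃ B : ℝ, 0 < B ∧ ∀ k : ℕ, ((k : ℝ) + 2) ^ 2 ≤ B * |indicial m (k + 2)| := by
  have hO : (fun k : ℕ ↦ ((k : ℝ) + 2) ^ 2) =O[atTop] fun k ↦ indicial m (k + 2) := by
    refine Asymptotics.IsBigO.of_bound 2 ?_
    filter_upwards [eventually_ge_atTop ⌈|m|⌉₊] with k hk
    have hmk : -(k : ℝ) ≤ m := (abs_le.1 (Nat.ceil_le.1 hk)).1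
    have hfactor : (k : ℝ) + 2 ≤ 2 * (k + 2) + m := by linarith
    rw [Real.norm_of_nonneg (by positivity)]
    calc ((k : ℝ) + 2) ^ 2 ≤ 2 * ((k + 2) * (k + 1)) := by nlinarith
      _ ≤ 2 * ((2 * (k + 2) + m) * (k + 1)) := by gcongr
      _ = 2 * indicial m (k + 2) := by simp only [indicial]; push_cast; ring
      _ ≤ 2 * ‖indicial m (k + 2)‖ := by gcongr; exact Real.le_norm_self _
  obtain ⟨B, hB, hbound⟩ := Asymptotics.bound_of_isBigO_nat_atTop hO
  refine ⟨B, hB, fun k ↦ ?_⟩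
  simpa using hbound (hm k)

theorem abs_quadraticWeight_le (m : ℝ) {i j : ℕ} (hij : 0 < i + j) :
    |quadraticWeight m i j| ≤ (|m| + 3) * ((i : ℝ) + j) ^ 2 := by
  have hone : (1 : ℝ) ≤ ((i : ℝ) + j) ^ 2 := one_le_pow₀ (by exact_mod_cast hij)
  have hprod : |(i : ℝ) * j| ≤ ((i : ℝ) + j) ^ 2 := by
    rw [abs_of_nonneg (by positivity)]
    nlinarith
  have hsq : |2 * (j : ℝ) * (j - 1)| ≤ 2 * ((i : ℝ) + j) ^ 2 := by
    have hi : (0 : ℝ) ≤ i := i.cast_nonneg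
    have hj : (0 : ℝ) ≤ j := j.cast_nonneg
    rw [abs_le]
    constructor <;> nlinarith [mul_nonneg hi hj, sq_nonneg ((j : ℝ) - 1)]
  calc |quadraticWeight m i j| ≤ |m| + |(i : ℝ) * j| + |2 * (j : ℝ) * (j - 1)| :=
        (abs_sub _ _).trans (by grw [abs_add_le])
    _ ≤ |m| * ((i : ℝ) + j) ^ 2 + ((i : ℝ) + j) ^ 2 + 2 * ((i : ℝ) + j) ^ 2 := by
        gcongr
        exact le_mul_of_one_le_right (abs_nonneg m) hone
    _ = (|m| + 3) * ((i : ℝ) + j) ^ 2 := by ring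

theorem abs_lowerOrderTerms_le (m lam : ℝ) (a : ℕ → ℝ) (k : ℕ) :
    |lowerOrderTerms m lam a k| ≤ ((k : ℝ) + 2) ^ 2 *
      (|lam| * |a k| + (|m| + 3) * ∑ p ∈ antidiagonal k, |a p.1| * |a p.2|) := by
  have hlin : |lam * ((k + 1) * a k)| ≤ ((k : ℝ) + 2) ^ 2 * (|lam| * |a k|) := by
    have hk : |(k : ℝ) + 1| ≤ (k + 2) ^ 2 := by
      rw [abs_of_nonneg (by positivity)]
      nlinarith
    calc |lam * ((k + 1) * a k)| = |(k : ℝ) + 1| * (|lam| * |a k|) := by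
          rw [abs_mul, abs_mul]; ring
      _ ≤ _ := by gcongr
  have hquad : |∑ p ∈ antidiagonal k,
        quadraticWeight m (p.1 + 1) (p.2 + 1) * (a p.1 * a p.2)| ≤
      ∑ p ∈ antidiagonal k, ((k : ℝ) + 2) ^ 2 * (|m| + 3) * (|a p.1| * |a p.2|) := by
    refine (Finset.abs_sum_le_sum_abs _ _).trans (Finset.sum_le_sum fun p hp ↦ ?_)
    rw [abs_mul, abs_mul]
    gcongr
    have hk : p.1 + 1 + (p.2 + 1) = k + 2 := by
      rw [← Finset.HasAntidiagonal.mem_antidiagonal.1 hp]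
      ring
    refine (abs_quadraticWeight_le m (by omega)).trans_eq ?_
    rw [← Nat.cast_add, hk]
    push_cast
    ring
  rw [← Finset.mul_sum] at hquad
  refine (abs_sub _ _).trans ((add_le_add hquad hlin).trans_eq ?_)
  ring

theorem exists_summable_of_formalDefect_eq_zero {m lam : ℝ} {φ : ℝ⟦X⟧}
    (hm : ∀ k : ℕ, indicial m (k + 2) ≠ 0) (hφ : formalDefect m lam φ = 0)
    (hφ0 : constantCoeff φ = 1) :
    ∃ ρ : ℝ, 0 < ρ ∧ Summable fun k ↦ ‖coeff k φ‖ * ρ ^ k := by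
  obtain ⟨B, hB, hindicial⟩ := exists_sq_le_mul_abs_indicial hm
  set a : ℕ → ℝ := fun k ↦ coeff (k + 1) φ with ha
  have hrec (k : ℕ) : |a (k + 1)| ≤ B * |lam| * |a k| +
      B * (|m| + 3) * ∑ p ∈ antidiagonal k, |a p.1| * |a p.2| := by
    have hD : 0 < |indicial m (k + 2)| := abs_pos.2 (hm k)
    refine le_of_mul_le_mul_left ?_ hD
    set T := |lam| * |a k| + (|m| + 3) * ∑ p ∈ antidiagonal k, |a p.1| * |a p.2| with hT
    calc |indicial m (k + 2)| * |a (k + 1)| = |lowerOrderTerms m lam a k| := by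
          rw [← abs_mul, ← (formalDefect_eq_zero_iff hφ0).1 hφ k]
      _ ≤ ((k : ℝ) + 2) ^ 2 * T := abs_lowerOrderTerms_le m lam a k
      _ ≤ B * |indicial m (k + 2)| * T := by gcongr; exact hindicial k
      _ = _ := by rw [hT]; ring
  obtain ⟨ρ, hρ, hsum⟩ := exists_summable_mul_pow_of_quadratic_recursion
    (fun k ↦ abs_nonneg (a k)) (by positivity) (by positivity) hrec
  refine ⟨ρ, hρ, (summable_nat_add_iff 1).1 ((hsum.mul_right ρ).congr fun k ↦ ?_)⟩
  rw [ha, Real.norm_eq_abs]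
  ring

end Convergence

section TaylorSeriesDefect

variable {𝕜 : Type*} [NontriviallyNormedField 𝕜] [CompleteSpace 𝕜] {m lam : 𝕜} {f : 𝕜 → 𝕜}

theorem analyticAt_odeDefect (hf : AnalyticAt 𝕜 f 0) :
    AnalyticAt 𝕜 (fun r ↦ odeDefect m lam r (f r) (deriv f r) (deriv (deriv f) r)) 0 := by
  unfold odeDefect
  fun_prop

theorem taylorSeries_odeDefect [CharZero 𝕜] (hf : AnalyticAt 𝕜 f 0) :
    taylorSeries (fun r ↦ odeDefect m lam r (f r) (deriv f r) (deriv (deriv f) r)) 0 =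
      formalDefect m lam (taylorSeries f 0) := by
  have hf₀ : ContDiffAt 𝕜 ∞ f 0 := hf.contDiffAt
  have hf₁ : ContDiffAt 𝕜 ∞ (deriv f) 0 := hf.deriv.contDiffAt
  have hf₂ : ContDiffAt 𝕜 ∞ (deriv (deriv f)) 0 := hf.deriv.deriv.contDiffAt
  have hid : taylorSeries (fun r : 𝕜 ↦ r) 0 = X := by rw [taylorSeries_id, map_zero, zero_add]
  have hlam : taylorSeries (fun r ↦ lam * r) 0 = C lam * X := by
    rw [taylorSeries_mul contDiffAt_const contDiffAt_fun_id, taylorSeries_const, hid]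
  simp (disch := fun_prop) only [formalDefect, odeDefect, sq, taylorSeries_sub, taylorSeries_add,
    taylorSeries_mul, taylorSeries_const, taylorSeries_deriv, hid, hlam, map_ofNat, map_one]

end TaylorSeriesDefect

section AnalyticSolutions

variable {m lam μ₁ : ℝ}

/-- The predicate `IsAnalyticSolOn` with an arbitrary real number `m` in place of `n - 1`. -/
def IsAnalyticSolOnOfReal (m lam μ₁ ε : ℝ) (h : ℝ → ℝ) : Prop :=
  AnalyticOn ℝ h (Set.Ico 0 ε) ∧
  (∀ r ∈ Set.Ioo (0 : ℝ) ε,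
    2 * r ^ 2 * h r * deriv (deriv h) r =
      m * h r * (h r - 1) + r * deriv h r * (r * deriv h r - lam * r - m) ∧ 0 < h r) ∧
  h 0 = 1 ∧ derivWithin h (Set.Ici 0) 0 = μ₁

theorem formalDefect_taylorSeries_eq_zero_iff {f : ℝ → ℝ} (hf : AnalyticAt ℝ f 0) :
    formalDefect m lam (taylorSeries f 0) = 0 ↔
      ∀ᶠ r in 𝓝[>] 0, odeDefect m lam r (f r) (deriv f r) (deriv (deriv f) r) = 0 := by
  have hzero : taylorSeries (fun _ ↦ (0 : ℝ)) 0 = 0 := by rw [taylorSeries_const, map_zero]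
  rw [← taylorSeries_odeDefect hf, ← hzero,
    taylorSeries_eq_iff_eventuallyEq (analyticAt_odeDefect hf) analyticAt_const]
  exact ⟨fun h ↦ h.filter_mono nhdsWithin_le_nhds,
    eventuallyEq_nhds_of_nhdsGT (analyticAt_odeDefect hf) analyticAt_const⟩

theorem exists_isAnalyticSolOnOfReal_of_taylorSeries {f : ℝ → ℝ} (hf : AnalyticAt ℝ f 0)
    (hode : formalDefect m lam (taylorSeries f 0) = 0)
    (h0 : constantCoeff (taylorSeries f 0) = 1) (h1 : coeff 1 (taylorSeries f 0) = μ₁) :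
    ∃ ε : ℝ, 0 < ε ∧ IsAnalyticSolOnOfReal m lam μ₁ ε f := by
  rw [constantCoeff_taylorSeries] at h0
  rw [coeff_one_taylorSeries] at h1
  have hpos : ∀ᶠ r in 𝓝 0, 0 < f r := hf.continuousAt.eventually_const_lt (h0 ▸ one_pos)
  have hright : ∀ᶠ r in 𝓝[>] 0, AnalyticAt ℝ f r ∧
      odeDefect m lam r (f r) (deriv f r) (deriv (deriv f) r) = 0 ∧ 0 < f r :=
    (hf.eventually_analyticAt.filter_mono nhdsWithin_le_nhds).and <|
      ((formalDefect_taylorSeries_eq_zero_iff hf).1 hode).and (hpos.filter_mono nhdsWithin_le_nhds)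
  obtain ⟨ε, hε, hIoo⟩ := mem_nhdsGT_iff_exists_Ioo_subset.1 hright
  refine ⟨ε, hε, fun r hr ↦ ?_, fun r hr ↦ ?_, h0, ?_⟩
  · rcases hr.1.eq_or_lt with rfl | hr0
    · exact hf.analyticWithinAt
    · exact (hIoo ⟨hr0, hr.2⟩).1.analyticWithinAt
  · exact (hIoo hr).2.imp_left sub_eq_zero.1
  · rw [derivWithin_Ici_eq_deriv hf.differentiableAt, h1]

theorem IsAnalyticSolOnOfReal.exists_taylorSeries {ε : ℝ} {g : ℝ → ℝ} (hε : 0 < ε)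
    (hg : IsAnalyticSolOnOfReal m lam μ₁ ε g) :
    ∃ f : ℝ → ℝ, AnalyticAt ℝ f 0 ∧ EqOn g f (Ico 0 ε) ∧
      formalDefect m lam (taylorSeries f 0) = 0 ∧ constantCoeff (taylorSeries f 0) = 1 ∧
      coeff 1 (taylorSeries f 0) = μ₁ := by
  obtain ⟨hanalytic, hode, h0, h1⟩ := hg
  have hmem : (0 : ℝ) ∈ Ico 0 ε := left_mem_Ico.2 hε
  obtain ⟨f, hgf0, hgf, hf⟩ := analyticWithinAt_iff_exists_analyticAt'.1 (hanalytic 0 hmem)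
  rw [insert_eq_of_mem hmem] at hgf
  refine ⟨f, hf, hgf, ?_, by rw [constantCoeff_taylorSeries, ← hgf0, h0], ?_⟩
  · rw [formalDefect_taylorSeries_eq_zero_iff hf]
    filter_upwards [Ioo_mem_nhdsGT hε] with r hr
    have hlocal : g =ᶠ[𝓝 r] f := (hgf.mono Ioo_subset_Ico_self).eventuallyEq_of_mem
      (isOpen_Ioo.mem_nhds hr)
    rw [← hlocal.deriv.deriv_eq, ← hlocal.deriv_eq, ← hlocal.eq_of_nhds]
    exact sub_eq_zero.2 (hode r hr).1
  · have hright : g =ᶠ[𝓝[≥] 0] f := hgf.eventuallyEq_of_mem (Ico_mem_nhdsGE hε)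
    rw [coeff_one_taylorSeries, ← derivWithin_Ici_eq_deriv hf.differentiableAt,
      ← hright.derivWithin_eq hgf0, h1]

theorem indicial_ne_zero (hm : ∀ k : ℕ, 2 ≤ k → 2 * (k : ℝ) + m ≠ 0) (k : ℕ) :
    indicial m (k + 2) ≠ 0 := by
  refine mul_ne_zero (hm (k + 2) (by omega)) ?_
  have hk : (k + 2 : ℕ) - (1 : ℝ) = k + 1 := by push_cast; ring
  rw [hk]
  positivity

theorem local_existence_uniqueness_analytic_general (m lam μ₁ : ℝ)
    (hm : ∀ k : ℕ, 2 ≤ k → 2 * (k : ℝ) + m ≠ 0) :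
    ∃ ε : ℝ, 0 < ε ∧
      ∃ h : ℝ → ℝ, IsAnalyticSolOnOfReal m lam μ₁ ε h ∧
        ∀ g : ℝ → ℝ, IsAnalyticSolOnOfReal m lam μ₁ ε g → EqOn g h (Ico 0 ε) := by
  have hindicial := indicial_ne_zero hm
  obtain ⟨φ, ⟨hφ, hφ0, hφ1⟩, hunique⟩ := existsUnique_formalDefect_eq_zero hindicial lam μ₁
  obtain ⟨ρ, hρ, hsum⟩ := exists_summable_of_formalDefect_eq_zero hindicial hφ hφ0
  obtain ⟨h, hh, rfl⟩ := exists_analyticAt_taylorSeries_eq hρ hsum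
  obtain ⟨ε, hε, hsol⟩ := exists_isAnalyticSolOnOfReal_of_taylorSeries hh hφ hφ0 hφ1
  refine ⟨ε, hε, h, hsol, fun g hg ↦ ?_⟩
  obtain ⟨f, hf, hgf, hformal⟩ := hg.exists_taylorSeries hε
  have hfh : f =ᶠ[𝓝 0] h := (taylorSeries_eq_iff_eventuallyEq hf hh).1 (hunique _ hformal)
  exact eqOn_Ico_of_eventuallyEq_nhdsGE hg.1 hsol.1 <|
    (hgf.eventuallyEq_of_mem (Ico_mem_nhdsGE hε)).trans (hfh.filter_mono nhdsWithin_le_nhds)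

end AnalyticSolutions

theorem local_existence_uniqueness_analytic (lam μ₁ : ℝ) (n : ℕ) (hn2 : 2 ≤ n) :
    ∃ ε : ℝ, 0 < ε ∧
      ∃ h : ℝ → ℝ, IsAnalyticSolOn n lam μ₁ ε h ∧
        ∀ g : ℝ → ℝ, IsAnalyticSolOn n lam μ₁ ε g → Set.EqOn g h (Set.Ico 0 ε) :=
  local_existence_uniqueness_analytic_general (n - 1) lam μ₁ fun k hk ↦ by
    have hk' : (2 : ℝ) ≤ k := by exact_mod_cast hk
    have hn : (2 : ℝ) ≤ n := by exact_mod_cast hn2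
    linarith
end
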